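/- Let F be a finite index set, and for each k ∈ {1,…,N} and f ∈ F let T_k^{i→f} be an operator on H_k; set T^{i→f} = Σ_{k=1}^N (extension of T_k^{i→f} to H). Let |t⟩ be a unit vector in H with single-site reduced density matrices ρ_k and entropies s_k, and for each k let P_k = max over density matrices σ on H_k of Σ_{f∈F} Var_σ(T_k^{i→f}). Then Σ_{f∈F} Var_{|t⟩}(T^{i→f}) ≤ ((1/N)·Σ_{k=1}^N P_k) · (N + 2N²·√((1/N)·Σ_{k=1}^N s_k)). (This is the paper's bound p_⊥ ≤ Avg_k(p_{⊥,k}^max)·(N + 2N²√(Avg_k s_k)) on the order-α² orthogonal scattering probability from an N-particle pure target state.) -/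

import Mathlib

open scoped BigOperators Kronecker Matrix ComplexOrder

noncomputable section
namespace Paper

/-- A density matrix: a positive semidefinite operator of trace one. -/
def IsDensityMatrix {n : Type*} [Fintype n] (ρ : Matrix n n ℂ) : Prop :=
  ρ.PosSemidef ∧ ρ.trace = 1

/-- The operator norm `‖A‖_∞` (largest singular value) of a matrix,
as the operator norm of the induced map on Euclidean space. -/
noncomputable def opNorm {n : Type*} [Fintype n] [DecidableEq n] (A : Matrix n n ℂ) : ℝ :=
  ‖LinearMap.toContinuousLinearMap (Matrix.toEuclideanLin A)‖

/-- Von Neumann entropy `−∑ λ ln λ` over the eigenvalues; since `Real.log 0 = 0`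
in Mathlib, the convention `0 · ln 0 = 0` is automatic. -/
noncomputable def entropy {n : Type*} [Fintype n] [DecidableEq n] (σ : Matrix n n ℂ) : ℝ :=
  if h : σ.IsHermitian then -∑ i, h.eigenvalues i * Real.log (h.eigenvalues i) else 0

/-- The variance `Var_ρ(A) = Tr[ρ A† A] − |Tr[ρ A]|²`. -/
noncomputable def variance {n : Type*} [Fintype n] (ρ A : Matrix n n ℂ) : ℝ :=
  (ρ * (Aᴴ * A)).trace.re - ‖(ρ * A).trace‖ ^ 2

/-- The trace norm `‖A‖₁ = Tr √(A†A)`: the sum of the singular values. -/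
noncomputable def traceNorm {n : Type*} [Fintype n] [DecidableEq n] (A : Matrix n n ℂ) : ℝ :=
  ∑ i, Real.sqrt ((Matrix.posSemidef_conjTranspose_mul_self A).1.eigenvalues i)

/-- The pure state `|v⟩⟨v|` associated with a vector `v`. -/
def pureState {n : Type*} (v : n → ℂ) : Matrix n n ℂ :=
  Matrix.of fun x y => v x * (starRingEnd ℂ) (v y)

/-- The expectation value `⟨v|M|v⟩`. -/
noncomputable def expval {n : Type*} [Fintype n] (M : Matrix n n ℂ) (v : n → ℂ) : ℂ :=
  ∑ x, ∑ y, (starRingEnd ℂ) (v x) * M x y * v y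

variable {N : ℕ} {d : Fin N → Type*} [∀ k, Fintype (d k)] [∀ k, DecidableEq (d k)]

/-- Extension of a local operator on the `k`-th factor to the `N`-fold tensor
product `H = H_1 ⊗ ⋯ ⊗ H_N`, tensoring with the identity on every other factor.
(The tensor product is realized with index set `∀ j, d j`.) -/
def extendAt (k : Fin N) (A : Matrix (d k) (d k) ℂ) : Matrix (∀ j, d j) (∀ j, d j) ℂ :=
  Matrix.of fun x y => if ∀ j, j ≠ k → x j = y j then A (x k) (y k) else 0

/-- Reduced density matrix on the `k`-th factor: partial trace over all other factors. -/
noncomputable def reduce (k : Fin N) (ρ : Matrix (∀ j, d j) (∀ j, d j) ℂ) :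
    Matrix (d k) (d k) ℂ :=
  Matrix.of fun a b => ∑ x : ∀ j, d j, if x k = a then ρ x (Function.update x k b) else 0

section InnerProduct

variable {E : Type*} [NormedAddCommGroup E] [InnerProductSpace ℂ E]

/-- Cauchy–Schwarz for finite families of vectors. -/
theorem norm_sum_inner_le {F : Type*} [Fintype F] {x y : F → E} {a b : ℝ}
    (hx : ∑ f, ‖x f‖ ^ 2 ≤ a) (hy : ∑ f, ‖y f‖ ^ 2 ≤ b) :
    ‖∑ f, inner ℂ (x f) (y f)‖ ≤ √a * √b := by
  have ha : 0 ≤ a := (Finset.sum_nonneg fun f _ => sq_nonneg _).trans hx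
  calc ‖∑ f, inner ℂ (x f) (y f)‖ ≤ ∑ f, ‖x f‖ * ‖y f‖ :=
        (norm_sum_le _ _).trans (Finset.sum_le_sum fun f _ => norm_inner_le_norm _ _)
    _ ≤ √(∑ f, ‖x f‖ ^ 2) * √(∑ f, ‖y f‖ ^ 2) := Real.sum_mul_le_sqrt_mul_sqrt _ _ _
    _ ≤ √a * √b := by gcongr

/-- The component of `A t` orthogonal to the unit vector `t`. -/
def deviation (A : E →L[ℂ] E) (t : E) : E := A t - inner ℂ t (A t) • t

theorem inner_deviation {t : E} (ht : ‖t‖ = 1) (A : E →L[ℂ] E) :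
    inner ℂ (deviation A t) t = 0 := by
  rw [deviation, inner_sub_left, inner_smul_left, inner_conj_symm, inner_self_eq_norm_sq_to_K, ht]
  simp

theorem norm_deviation_sq {t : E} (ht : ‖t‖ = 1) (A : E →L[ℂ] E) :
    ‖deviation A t‖ ^ 2 = ‖A t‖ ^ 2 - ‖inner ℂ t (A t)‖ ^ 2 := by
  have h := @norm_add_sq ℂ _ _ _ _ (deviation A t) (inner ℂ t (A t) • t)
  rw [inner_smul_right, inner_deviation ht, norm_smul, ht] at h
  simp only [deviation, sub_add_cancel, mul_zero, map_zero, mul_one, add_zero] at h ⊢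
  linarith

theorem deviation_sum {κ : Type*} [Fintype κ] (A : κ → E →L[ℂ] E) (t : E) :
    deviation (∑ k, A k) t = ∑ k, deviation (A k) t := by
  simp [deviation, Finset.sum_smul]

theorem deviation_sub_smul_one {t : E} (ht : ‖t‖ = 1) (A : E →L[ℂ] E) (c : ℂ) :
    deviation (A - c • 1) t = deviation A t := by
  simp only [deviation, sub_apply, smul_apply, one_apply_eq_self, inner_sub_right,
    inner_smul_right, inner_self_eq_norm_sq_to_K, ht, sub_smul]
  simp

variable {F : Type*} [Fintype F]

theorem sum_norm_deviation_sq_le {t : E} (ht : ‖t‖ = 1) {X : F → E →L[ℂ] E} {P : ℝ}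
    (hX : ∀ w, ∑ f, ‖X f w‖ ^ 2 ≤ P * ‖w‖ ^ 2) : ∑ f, ‖deviation (X f) t‖ ^ 2 ≤ P := by
  have h := hX t
  rw [ht, one_pow, mul_one] at h
  refine (Finset.sum_le_sum fun f _ => ?_).trans h
  rw [norm_deviation_sq ht]
  exact sub_le_self _ (sq_nonneg _)

variable [CompleteSpace E]

/-- The covariance of two families in a unit vector `t`, one commuting with a projection `Q` and
the other compressed to scalars by `Q`, is small when `t` is close to the range of `Q`. -/
theorem norm_sum_inner_deviation_le {t : E} (ht : ‖t‖ = 1) {X D : F → E →L[ℂ] E} {P R : ℝ}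
    (hX : ∀ w, ∑ f, ‖X f w‖ ^ 2 ≤ P * ‖w‖ ^ 2) (hD : ∀ w, ∑ f, ‖D f w‖ ^ 2 ≤ R * ‖w‖ ^ 2)
    {Q : E →L[ℂ] E} (hQ : IsStarProjection Q) (hQX : ∀ f, Commute Q (X f)) {a : F → ℂ}
    (hQD : ∀ f, Q * D f * Q = a f • Q) {e : ℝ} (he : ‖t - Q t‖ ^ 2 = e) (he1 : e < 1) :
    ‖∑ f, inner ℂ (deviation (X f) t) (deviation (D f) t)‖ ≤ √P * √R * (3 * √e + 2 * e) := by
  have hQQ : ∀ w, Q (Q w) = Q w := fun w => DFunLike.congr_fun hQ.isIdempotentElem.eq w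
  have hsymm : ∀ v w, inner ℂ (Q v) w = inner ℂ v (Q w) := fun v w => by
    conv_lhs => rw [← hQ.isSelfAdjoint.star_eq, ContinuousLinearMap.star_eq_adjoint,
      ContinuousLinearMap.adjoint_inner_left]
  have hcomm : ∀ f w, Q (X f w) = X f (Q w) := fun f w => DFunLike.congr_fun (hQX f).eq w
  have hcompr : ∀ f w, Q (D f (Q w)) = a f • Q w := fun f w => DFunLike.congr_fun (hQD f) w
  have he0 : 0 ≤ e := he ▸ sq_nonneg _
  have hP : 0 ≤ P := by
    have := (Finset.sum_nonneg fun f _ => sq_nonneg _).trans (hX t)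
    simpa [ht] using this
  have hR : 0 ≤ R := by
    have := (Finset.sum_nonneg fun f _ => sq_nonneg _).trans (hD t)
    simpa [ht] using this
  obtain ⟨u, hu⟩ : ∃ u, u = Q t := ⟨_, rfl⟩
  obtain ⟨v, hv⟩ : ∃ v, v = t - Q t := ⟨_, rfl⟩
  have htuv : t = u + v := by rw [hu, hv]; abel
  have hQu : Q u = u := by rw [hu, hQQ]
  have hQv : Q v = 0 := by rw [hv, map_sub, hQQ, sub_self]
  have huv : inner ℂ u v = 0 := by rw [← hQu, hsymm, hQv, inner_zero_right]
  have hvn : ‖v‖ ^ 2 = e := by rw [hv, he]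
  have hun : ‖u‖ ^ 2 = 1 - e := by
    have h := @norm_add_sq ℂ _ _ _ _ u v
    rw [← htuv, ht, huv, hvn] at h
    simp at h
    linarith
  -- the centred operators `X f - ⟨X f⟩`
  set x : F → ℂ := fun f => inner ℂ t (X f t) with hx
  set Y : F → E → E := fun f w => X f w - x f • w with hY
  have hYt : ∀ f, deviation (X f) t = Y f t := fun f => rfl
  have hQY : ∀ f w, Q (Y f w) = Y f (Q w) := fun f w => by
    simp only [hY, map_sub, map_smul, hcomm]
  have hYtt : ∀ f, inner ℂ (Y f t) t = 0 := fun f => inner_deviation ht _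
  have hYadd : ∀ f, Y f t = Y f u + Y f v := fun f => by
    simp only [hY]; rw [htuv]; simp only [map_add, smul_add]; abel
  have hYQ : ∀ f z, Q z = 0 → inner ℂ (Y f u) z = 0 := fun f z hz => by
    rw [← hQu, ← hQY, hsymm, hz, inner_zero_right]
  have hYQ' : ∀ f, inner ℂ (Y f v) u = 0 := fun f => by
    rw [← hQu, ← hsymm, hQY, hQv]; simp [hY]
  have hYu : ∀ f, inner ℂ (Y f t) u = - inner ℂ (Y f v) v := fun f => by
    have h := hYtt f
    nth_rw 2 [htuv] at h
    rw [inner_add_right] at h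
    have h2 : inner ℂ (Y f t) v = inner ℂ (Y f v) v := by
      rw [hYadd, inner_add_left, hYQ f v hQv, zero_add]
    rw [h2] at h
    exact eq_neg_of_add_eq_zero_left h
  have hsplit : ∀ f, inner ℂ (deviation (X f) t) (deviation (D f) t) =
      inner ℂ (Y f t) (D f v) + inner ℂ (Y f v) (D f u) - inner ℂ (Y f v) (a f • v) := by
    intro f
    have h1 : inner ℂ (deviation (X f) t) (deviation (D f) t) = inner ℂ (Y f t) (D f t) := by
      rw [hYt, deviation, inner_sub_right, inner_smul_right, hYtt, mul_zero, sub_zero]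
    have h2 : inner ℂ (Y f t) (D f u - a f • u) = inner ℂ (Y f v) (D f u) := by
      have hz : Q (D f u - a f • u) = 0 := by
        have := hcompr f u
        rw [hQu] at this
        rw [map_sub, map_smul, hQu, this, sub_self]
      rw [hYadd, inner_add_left, hYQ f _ hz, zero_add, inner_sub_right, inner_smul_right, hYQ',
        mul_zero, sub_zero]
    have h3 : D f t = D f v + ((D f u - a f • u) + a f • u) := by
      conv_lhs => rw [htuv, map_add]
      abel
    rw [h1, h3, inner_add_right, inner_add_right, h2, inner_smul_right, hYu, inner_smul_right]
    ring
  have hx2 : ∑ f, ‖x f‖ ^ 2 ≤ P := by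
    have h := hX t
    rw [ht, one_pow, mul_one] at h
    refine (Finset.sum_le_sum fun f _ => ?_).trans h
    have := norm_deviation_sq ht (X f)
    nlinarith [sq_nonneg ‖deviation (X f) t‖]
  have hYv : ∑ f, ‖Y f v‖ ^ 2 ≤ 4 * P * e := by
    calc ∑ f, ‖Y f v‖ ^ 2 ≤ ∑ f, (2 * ‖X f v‖ ^ 2 + 2 * (‖x f‖ ^ 2 * e)) := by
          refine Finset.sum_le_sum fun f _ => ?_
          have h : ‖Y f v‖ ≤ ‖X f v‖ + ‖x f‖ * ‖v‖ := (norm_sub_le _ _).trans_eq (by rw [norm_smul])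
          rw [← hvn]
          nlinarith [sq_nonneg (‖X f v‖ - ‖x f‖ * ‖v‖), norm_nonneg (Y f v)]
      _ = 2 * ∑ f, ‖X f v‖ ^ 2 + 2 * ((∑ f, ‖x f‖ ^ 2) * e) := by
          rw [Finset.sum_add_distrib, Finset.mul_sum, Finset.sum_mul, Finset.mul_sum]
      _ ≤ 2 * (P * e) + 2 * (P * e) := by
          have := hX v
          rw [hvn] at this
          gcongr
      _ = 4 * P * e := by ring
  have hDv : ∑ f, ‖D f v‖ ^ 2 ≤ R * e := hvn ▸ hD v
  have hDu : ∑ f, ‖D f u‖ ^ 2 ≤ R := by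
    refine (hD u).trans ?_
    rw [hun]
    nlinarith
  have ha : ∑ f, ‖a f • v‖ ^ 2 ≤ R * e := by
    have hle : (∑ f, ‖a f‖ ^ 2) * (1 - e) ≤ R * (1 - e) := by
      refine le_trans ?_ (hun ▸ hD u)
      rw [Finset.sum_mul]
      refine Finset.sum_le_sum fun f _ => ?_
      rw [← hun, ← mul_pow, ← norm_smul]
      have h := hcompr f u
      rw [hQu] at h
      rw [← h]
      have := hQ.norm_le
      gcongr
      calc ‖Q (D f u)‖ ≤ ‖Q‖ * ‖D f u‖ := Q.le_opNorm _
        _ ≤ 1 * ‖D f u‖ := by gcongr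
        _ = ‖D f u‖ := one_mul _
    have := le_of_mul_le_mul_right hle (by linarith)
    simp only [norm_smul, mul_pow, hvn, ← Finset.sum_mul]
    gcongr
  have hYtP : ∑ f, ‖Y f t‖ ^ 2 ≤ P := sum_norm_deviation_sq_le ht hX
  have b1 := norm_sum_inner_le hYtP hDv
  have b2 := norm_sum_inner_le hYv hDu
  have b3 := norm_sum_inner_le hYv ha
  have s1 : √(R * e) = √R * √e := Real.sqrt_mul hR e
  have s2 : √(4 * P * e) = 2 * √P * √e := by
    rw [Real.sqrt_mul (by positivity), Real.sqrt_mul (by norm_num),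
      show (4 : ℝ) = 2 ^ 2 by norm_num, Real.sqrt_sq (by norm_num)]
  rw [s1] at b1 b3
  rw [s2] at b2 b3
  simp only [hsplit, Finset.sum_sub_distrib, Finset.sum_add_distrib]
  refine (norm_sub_le _ _).trans ?_
  refine (add_le_add_left (norm_add_le _ _) _).trans ?_
  have he' : √e * √e = e := Real.mul_self_sqrt he0
  calc _ ≤ √P * (√R * √e) + 2 * √P * √e * √R + 2 * √P * √e * (√R * √e) := by gcongr
    _ = √P * √R * (3 * √e + 2 * (√e * √e)) := by ring
    _ = _ := by rw [he']

end InnerProduct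

section Entropy

theorem entropy_sum_ge_one_sub {ι : Type*} [Fintype ι] {l : ι → ℝ} (h0 : ∀ i, 0 ≤ l i)
    (h1 : ∑ i, l i = 1) {j : ι} (hj : ∀ i, l i ≤ l j) :
    1 - l j ≤ -∑ i, l i * Real.log (l i) := by
  have h : ∀ i, l i * Real.log (l i) ≤ l i * (l j - 1) := fun i => by
    rcases (h0 i).eq_or_lt with h | h
    · simp [← h]
    · refine mul_le_mul_of_nonneg_left ?_ h.le
      linarith [Real.log_le_sub_one_of_pos h, hj i]
  have := Finset.sum_le_sum fun i (_ : i ∈ Finset.univ) => h i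
  rw [← Finset.sum_mul, h1] at this
  linarith

theorem neg_mul_log_ge {e : ℝ} (he : 0 ≤ e) : 3 * e - 8 * e ^ 2 ≤ -(e * Real.log e) := by
  rcases he.eq_or_lt with h | h
  · simp [← h]
  · have h8 := Real.log_le_sub_one_of_pos (show 0 < 8 * e by linarith)
    have hlog8 : Real.log 8 = 3 * Real.log 2 := by
      rw [show (8 : ℝ) = 2 ^ 3 by norm_num, Real.log_pow]; norm_num
    rw [Real.log_mul (by norm_num) h.ne', hlog8] at h8
    have := Real.log_two_gt_d9
    nlinarith

theorem entropy_sum_ge_quadratic {ι : Type*} [Fintype ι] {l : ι → ℝ} (h0 : ∀ i, 0 ≤ l i)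
    (h1 : ∑ i, l i = 1) (j : ι) :
    4 * (1 - l j) - 9 * (1 - l j) ^ 2 ≤ -∑ i, l i * Real.log (l i) := by
  classical
  set e := 1 - l j with he
  have hrest : ∑ i ∈ Finset.univ.erase j, l i = e := by
    have := Finset.add_sum_erase Finset.univ l (Finset.mem_univ j)
    linarith
  have he0 : 0 ≤ e := hrest ▸ Finset.sum_nonneg fun i _ => h0 i
  have hle : ∀ i ∈ Finset.univ.erase j, l i ≤ e := fun i hi =>
    hrest ▸ Finset.single_le_sum (fun i _ => h0 i) hi
  have hoff : ∑ i ∈ Finset.univ.erase j, l i * Real.log (l i) ≤ e * Real.log e := by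
    nth_rw 1 [← hrest]
    rw [Finset.sum_mul]
    refine Finset.sum_le_sum fun i hi => ?_
    rcases (h0 i).eq_or_lt with h | h
    · simp [← h]
    · exact mul_le_mul_of_nonneg_left (Real.log_le_log h (hle i hi)) h.le
  have hdiag : l j * Real.log (l j) ≤ -((1 - e) * e) := by
    rcases (h0 j).eq_or_lt with h | h
    · have : e = 1 := by rw [he, ← h]; ring
      simp [← h, this]
    · have := mul_le_mul_of_nonneg_left (Real.log_le_sub_one_of_pos h) h.le
      rw [he]
      linarith
  have := neg_mul_log_ge he0
  rw [← Finset.add_sum_erase Finset.univ _ (Finset.mem_univ j)]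
  nlinarith

theorem three_sqrt_add_le_two_sqrt {e s : ℝ} (he0 : 0 ≤ e) (hes : e ≤ s)
    (hs : 4 * e - 9 * e ^ 2 ≤ s) (hs1 : s < 1 / 4) : 3 * √e + 2 * e ≤ 2 * √s := by
  have he : e < 19 / 250 := by
    by_contra! h
    nlinarith
  have hr : √e ≤ 7 / 25 := by
    rw [Real.sqrt_le_left (by norm_num)]
    linarith
  have hsq : √e * √e = e := Real.mul_self_sqrt he0
  have h0 := Real.sqrt_nonneg e
  have : (3 * √e + 2 * e) / 2 ≤ √s := by
    apply Real.le_sqrt_of_sq_le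
    have : ((3 * √e + 2 * e) / 2) ^ 2 = e * (9 / 4 + 3 * √e + e) := by
      have : (3 * √e + 2 * e) ^ 2 = 9 * (√e * √e) + 12 * √e * e + 4 * e ^ 2 := by ring
      rw [div_pow, this, hsq]; ring
    rw [this]
    nlinarith
  linarith

end Entropy

section PureState

open WithLp

variable {n : Type*} [Fintype n]

theorem pureState_mul_mul_pureState (v : n → ℂ) (A : Matrix n n ℂ) :
    pureState v * A * pureState v = (pureState v * A).trace • pureState v := by
  rw [show pureState v = Matrix.vecMulVec v (star v) from rfl, Matrix.vecMulVec_mul,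
    Matrix.vecMulVec_mul_vecMulVec, Matrix.trace_vecMulVec, Matrix.vecMulVec_smul,
    dotProduct_comm]

theorem conjTranspose_pureState (v : n → ℂ) : (pureState v)ᴴ = pureState v :=
  (Matrix.posSemidef_vecMulVec_self_star v).isHermitian

theorem IsDensityMatrix.convexCombination {σ τ : Matrix n n ℂ} (hσ : IsDensityMatrix σ)
    (hτ : IsDensityMatrix τ) {r : ℝ} (h0 : 0 ≤ r) (h1 : r ≤ 1) :
    IsDensityMatrix (((1 - r : ℝ) : ℂ) • σ + (r : ℂ) • τ) := by
  refine ⟨(hσ.1.smul ?_).add (hτ.1.smul ?_), ?_⟩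
  · exact_mod_cast sub_nonneg.2 h1
  · exact_mod_cast h0
  · simp [hσ.2, hτ.2]

variable [DecidableEq n]

theorem trace_pureState_mul (v : n → ℂ) (M : Matrix n n ℂ) :
    (pureState v * M).trace =
      inner ℂ (toLp 2 v) (Matrix.toEuclideanCLM (𝕜 := ℂ) M (toLp 2 v)) := by
  rw [show pureState v = Matrix.vecMulVec v (star v) from rfl, Matrix.vecMulVec_mul,
    Matrix.trace_vecMulVec, Matrix.toEuclideanCLM_toLp, EuclideanSpace.inner_toLp_toLp,
    dotProduct_comm, ← Matrix.dotProduct_mulVec, dotProduct_comm]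

theorem re_trace_pureState_mul_conjTranspose_mul_self (v : n → ℂ) (A : Matrix n n ℂ) :
    (pureState v * (Aᴴ * A)).trace.re =
      ‖Matrix.toEuclideanCLM (𝕜 := ℂ) A (toLp 2 v)‖ ^ 2 := by
  rw [trace_pureState_mul, map_mul, ← Matrix.star_eq_conjTranspose, map_star,
    mul_apply_eq_comp, ContinuousLinearMap.star_eq_adjoint,
    ContinuousLinearMap.adjoint_inner_right, inner_self_eq_norm_sq_to_K]
  norm_cast

theorem variance_pureState {v : n → ℂ} (hv : ‖toLp 2 v‖ = 1) (A : Matrix n n ℂ) :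
    variance (pureState v) A =
      ‖deviation (Matrix.toEuclideanCLM (𝕜 := ℂ) A) (toLp 2 v)‖ ^ 2 := by
  rw [norm_deviation_sq hv, variance, re_trace_pureState_mul_conjTranspose_mul_self,
    trace_pureState_mul]

theorem isDensityMatrix_pureState {v : n → ℂ} (hv : ‖toLp 2 v‖ = 1) :
    IsDensityMatrix (pureState v) := by
  refine ⟨Matrix.posSemidef_vecMulVec_self_star v, ?_⟩
  have h := trace_pureState_mul v 1
  rw [mul_one, map_one, one_apply_eq_self, inner_self_eq_norm_sq_to_K, hv] at h
  simpa using h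

theorem pureState_mul_self {v : n → ℂ} (hv : ‖toLp 2 v‖ = 1) :
    pureState v * pureState v = pureState v := by
  have h := pureState_mul_mul_pureState v 1
  rwa [mul_one, (isDensityMatrix_pureState hv).2, one_smul] at h

variable {F : Type*} [Fintype F]

/-- At a maximizer `σ` of the total variance, the operators centred at their `σ`-means have
total second moment at most the maximal variance in every state. -/
theorem exists_center {T : F → Matrix n n ℂ} {P : ℝ}
    (hP : IsGreatest {x : ℝ | ∃ σ : Matrix n n ℂ, IsDensityMatrix σ ∧ x = ∑ f, variance σ (T f)} P) :
    ∃ c : F → ℂ, ∀ w : EuclideanSpace ℂ n,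
      ∑ f, ‖Matrix.toEuclideanCLM (𝕜 := ℂ) (T f - c f • 1) w‖ ^ 2 ≤ P * ‖w‖ ^ 2 := by
  obtain ⟨⟨σ, hσ, hPσ⟩, hmax⟩ := hP
  set c : F → ℂ := fun f => (σ * T f).trace with hc
  have key : ∀ w : EuclideanSpace ℂ n, ‖w‖ = 1 →
      ∑ f, ‖Matrix.toEuclideanCLM (𝕜 := ℂ) (T f - c f • 1) w‖ ^ 2 ≤ P := by
    intro w hw
    set b : F → ℂ := fun f => (pureState (ofLp w) * T f).trace with hb
    set p : F → ℝ := fun f => (σ * ((T f)ᴴ * T f)).trace.re with hp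
    set q : F → ℝ := fun f => (pureState (ofLp w) * ((T f)ᴴ * T f)).trace.re with hq
    have hpure : IsDensityMatrix (pureState (ofLp w)) := isDensityMatrix_pureState hw
    have hnorm : ∀ f, ‖Matrix.toEuclideanCLM (𝕜 := ℂ) (T f - c f • 1) w‖ ^ 2 =
        q f - 2 * (star (c f) * b f).re + ‖c f‖ ^ 2 := by
      intro f
      have h1 := re_trace_pureState_mul_conjTranspose_mul_self (ofLp w) (T f)
      have h2 := trace_pureState_mul (ofLp w) (T f)
      rw [map_sub, map_smul, map_one, sub_apply, smul_apply, one_apply_eq_self,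
        @norm_sub_sq ℂ, norm_smul, hw, inner_smul_right, ← inner_conj_symm]
      rw [show (inner ℂ w (Matrix.toEuclideanCLM (𝕜 := ℂ) (T f) w)) = b f from h2.symm,
        show ‖Matrix.toEuclideanCLM (𝕜 := ℂ) (T f) w‖ ^ 2 = q f from h1.symm]
      simp
    have hvar : ∀ r : ℝ, 0 ≤ r → r ≤ 1 →
        ∑ f, ((1 - r) * p f + r * q f - ‖((1 - r : ℝ) : ℂ) * c f + r * b f‖ ^ 2) ≤ P := by
      intro r h0 h1
      refine hmax ⟨_, hσ.convexCombination hpure h0 h1, ?_⟩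
      refine Finset.sum_congr rfl fun f _ => ?_
      simp only [variance, add_mul, Matrix.smul_mul, Matrix.trace_add, Matrix.trace_smul,
        smul_eq_mul, Complex.add_re, Complex.re_ofReal_mul]
      rfl
    have hPp : P = ∑ f, (p f - ‖c f‖ ^ 2) := hPσ
    set S := ∑ f, ‖b f - c f‖ ^ 2 with hS
    set L := ∑ f, (q f - p f - 2 * (star (c f) * (b f - c f)).re) with hL
    have hS0 : 0 ≤ S := Finset.sum_nonneg fun f _ => sq_nonneg _
    have hexp : ∀ r : ℝ,
        ∑ f, ((1 - r) * p f + r * q f - ‖((1 - r : ℝ) : ℂ) * c f + r * b f‖ ^ 2) =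
          P + r * L - r ^ 2 * S := by
      intro r
      rw [hPp, hL, hS, Finset.mul_sum, Finset.mul_sum, ← Finset.sum_add_distrib,
        ← Finset.sum_sub_distrib]
      refine Finset.sum_congr rfl fun f _ => ?_
      simp only [← Complex.normSq_eq_norm_sq, Complex.normSq_apply]
      simp
      ring
    have hL0 : L ≤ 0 := by
      by_contra! hpos
      have hr : 0 < L / (L + S + 1) := by positivity
      have hr1 : L / (L + S + 1) ≤ 1 := by rw [div_le_one (by positivity)]; linarith
      have h := hvar _ hr.le hr1
      rw [hexp] at h
      have h2 : L / (L + S + 1) * S < L := by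
        rw [div_mul_eq_mul_div, div_lt_iff₀ (by positivity)]
        nlinarith
      nlinarith
    have : ∑ f, ‖Matrix.toEuclideanCLM (𝕜 := ℂ) (T f - c f • 1) w‖ ^ 2 = P + L := by
      rw [hPp, hL, ← Finset.sum_add_distrib]
      refine Finset.sum_congr rfl fun f _ => ?_
      rw [hnorm]
      simp only [← Complex.normSq_eq_norm_sq, Complex.normSq_apply]
      simp
      ring
    linarith
  refine ⟨c, fun w => ?_⟩
  rcases eq_or_ne w 0 with rfl | hw
  · simp
  · have hw' : ‖w‖ ≠ 0 := norm_ne_zero_iff.2 hw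
    have h := key (((‖w‖⁻¹ : ℝ) : ℂ) • w) (by simp [norm_smul, hw'])
    simp only [map_smul, norm_smul, mul_pow, ← Finset.mul_sum] at h
    simp only [Complex.norm_real, norm_inv, norm_norm, inv_pow] at h
    rwa [inv_mul_le_iff₀ (by positivity), mul_comm] at h

end PureState

section Extension

open WithLp Function

theorem sum_ite_eq_off {M : Type*} [AddCommMonoid M] (k : Fin N)
    (x : ∀ j, d j) (g : (∀ j, d j) → M) :
    (∑ y, if ∀ j, j ≠ k → x j = y j then g y else 0) = ∑ a, g (update x k a) := by
  rw [← Finset.sum_filter]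
  refine Finset.sum_bij' (fun y _ => y k) (fun a _ => update x k a) (fun _ _ => Finset.mem_univ _)
    (fun a _ => ?_) (fun y hy => ?_) (fun a _ => update_self _ _ _) (fun y hy => ?_)
  · simp only [Finset.mem_filter_univ]
    intro j hj
    rw [update_of_ne hj]
  all_goals
    have h : update x k (y k) = y := by
      rw [Finset.mem_filter_univ] at hy
      ext j
      rcases eq_or_ne j k with rfl | hj
      · rw [update_self]
      · rw [update_of_ne hj, hy j hj]
    rw [h]

/-- Averaging a sum over all configurations along the `k`-th coordinate. -/
theorem sum_sum_update {M : Type*} [AddCommMonoid M] (k : Fin N) (g : (∀ j, d j) → M) :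
    ∑ x, ∑ a, g (update x k a) = Fintype.card (d k) • ∑ x, g x := by
  have h : ∀ y : ∀ j, d j,
      (∑ x : ∀ j, d j, if ∀ j, j ≠ k → x j = y j then g y else 0) = Fintype.card (d k) • g y := fun y => by
    have := sum_ite_eq_off k y fun _ => g y
    simp only [Finset.sum_const, Finset.card_univ] at this
    simpa only [eq_comm] using this
  simp_rw [← sum_ite_eq_off k]
  rw [Finset.sum_comm, Finset.smul_sum]
  exact Finset.sum_congr rfl fun y _ => h y

theorem extendAt_mulVec (k : Fin N) (A : Matrix (d k) (d k) ℂ) (w : (∀ j, d j) → ℂ)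
    (x : ∀ j, d j) : (extendAt k A *ᵥ w) x = ∑ a, A (x k) a * w (update x k a) := by
  have h := sum_ite_eq_off k x fun y => A (x k) (y k) * w y
  simp only [update_self] at h
  rw [← h]
  simp only [Matrix.mulVec, dotProduct, extendAt, Matrix.of_apply, ite_mul, zero_mul]

theorem extendAt_mul (k : Fin N) (A B : Matrix (d k) (d k) ℂ) :
    extendAt k (A * B) = extendAt k A * extendAt k B := by
  refine Matrix.ext_of_mulVec_single fun i => ?_
  rw [← Matrix.mulVec_mulVec]
  ext x
  simp only [extendAt_mulVec, update_self, update_idem, Matrix.mul_apply, Finset.sum_mul,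
    Finset.mul_sum, mul_assoc]
  exact Finset.sum_comm

theorem extendAt_commute {k l : Fin N} (hkl : k ≠ l) (A : Matrix (d k) (d k) ℂ)
    (B : Matrix (d l) (d l) ℂ) : Commute (extendAt k A) (extendAt l B) := by
  refine Matrix.ext_of_mulVec_single fun i => ?_
  rw [← Matrix.mulVec_mulVec, ← Matrix.mulVec_mulVec]
  ext x
  simp only [extendAt_mulVec, Finset.mul_sum, update_of_ne hkl, update_of_ne hkl.symm]
  rw [Finset.sum_comm]
  simp only [update_comm hkl, mul_left_comm]

theorem extendAt_one (k : Fin N) : extendAt (d := d) k 1 = 1 := by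
  refine Matrix.ext_of_mulVec_single fun i => ?_
  ext x
  rw [extendAt_mulVec, Matrix.one_mulVec]
  simp [Matrix.one_apply]

theorem extendAt_sub {N : ℕ} {d : Fin N → Type*} [∀ k, DecidableEq (d k)]
    (k : Fin N) (A B : Matrix (d k) (d k) ℂ) :
    extendAt k (A - B) = extendAt k A - extendAt k B := by
  ext x y
  simp only [extendAt, Matrix.of_apply, Matrix.sub_apply]
  split_ifs <;> simp

theorem extendAt_smul {N : ℕ} {d : Fin N → Type*} [∀ k, DecidableEq (d k)]
    (k : Fin N) (c : ℂ) (A : Matrix (d k) (d k) ℂ) :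
    extendAt k (c • A) = c • extendAt k A := by
  ext x y
  simp [extendAt]

theorem conjTranspose_extendAt {N : ℕ} {d : Fin N → Type*} [∀ k, DecidableEq (d k)]
    (k : Fin N) (A : Matrix (d k) (d k) ℂ) :
    (extendAt k A)ᴴ = extendAt k Aᴴ := by
  ext x y
  simp only [extendAt, Matrix.conjTranspose_apply, Matrix.of_apply, apply_ite star, star_zero]
  simp only [eq_comm]

theorem trace_mul_extendAt (k : Fin N) (ρ : Matrix (∀ j, d j) (∀ j, d j) ℂ)
    (A : Matrix (d k) (d k) ℂ) : (ρ * extendAt k A).trace = (reduce k ρ * A).trace := by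
  have h : ∀ x : ∀ j, d j, ∑ y, ρ x y * extendAt k A y x =
      ∑ b, ρ x (update x k b) * A b (x k) := fun x => by
    have h := sum_ite_eq_off k x fun y => ρ x y * A (y k) (x k)
    simp only [update_self] at h
    rw [← h]
    simp only [extendAt, Matrix.of_apply, mul_ite, mul_zero, eq_comm]
  simp only [Matrix.trace, Matrix.diag_apply, Matrix.mul_apply, reduce, Matrix.of_apply, h,
    Finset.sum_mul, ite_mul, zero_mul]
  trans ∑ a, ∑ x : ∀ j, d j, ∑ b, if x k = a then ρ x (update x k b) * A b a else 0
  · rw [Finset.sum_comm (s := (Finset.univ : Finset (d k)))]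
    refine Finset.sum_congr rfl fun x _ => ?_
    rw [Finset.sum_comm]
    simp
  · exact Finset.sum_congr rfl fun a _ => Finset.sum_comm

theorem isDensityMatrix_reduce_pureState [∀ k, Nonempty (d k)] (k : Fin N) {t : (∀ j, d j) → ℂ}
    (ht : ‖toLp 2 t‖ = 1) : IsDensityMatrix (reduce k (pureState t)) := by
  have hcard : 0 < Fintype.card (d k) := Fintype.card_pos
  constructor
  · have h : reduce k (pureState t) = ((Fintype.card (d k) : ℂ)⁻¹) •
        ∑ x, Matrix.vecMulVec (fun a => t (update x k a)) (star fun a => t (update x k a)) := by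
      rw [eq_inv_smul_iff₀ (by exact_mod_cast hcard.ne')]
      ext a b
      have := sum_sum_update (d := d) k
        fun x => if x k = a then pureState t x (update x k b) else 0
      simp only [update_self, update_idem, Finset.sum_ite_eq', Finset.mem_univ, if_true] at this
      rw [Matrix.smul_apply, Matrix.sum_apply, Nat.cast_smul_eq_nsmul]
      exact this.symm
    rw [h]
    refine (Matrix.posSemidef_sum _ fun x _ => Matrix.posSemidef_vecMulVec_self_star _).smul ?_
    rw [inv_nonneg]
    exact_mod_cast hcard.le
  · have h := trace_mul_extendAt k (pureState t) 1
    rw [extendAt_one, mul_one, mul_one, (isDensityMatrix_pureState ht).2] at h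
    exact h.symm

variable {F : Type*} [Fintype F]

theorem sum_norm_extendAt_sq_le [∀ k, Nonempty (d k)] (k : Fin N)
    {D : F → Matrix (d k) (d k) ℂ} {P : ℝ}
    (hD : ∀ w, ∑ f, ‖Matrix.toEuclideanCLM (𝕜 := ℂ) (D f) w‖ ^ 2 ≤ P * ‖w‖ ^ 2)
    (w : EuclideanSpace ℂ (∀ j, d j)) :
    ∑ f, ‖Matrix.toEuclideanCLM (𝕜 := ℂ) (extendAt k (D f)) w‖ ^ 2 ≤ P * ‖w‖ ^ 2 := by
  have hcard : (0 : ℝ) < Fintype.card (d k) := by exact_mod_cast Fintype.card_pos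
  have hslice : ∀ w : EuclideanSpace ℂ (∀ j, d j), Fintype.card (d k) * ‖w‖ ^ 2 =
      ∑ x, ‖(toLp 2 fun a => w (update x k a) : EuclideanSpace ℂ (d k))‖ ^ 2 := fun w => by
    simp only [EuclideanSpace.norm_sq_eq]
    rw [sum_sum_update k fun x => ‖w x‖ ^ 2, nsmul_eq_mul]
  have hact : ∀ f (x : ∀ j, d j),
      (toLp 2 fun a => Matrix.toEuclideanCLM (𝕜 := ℂ) (extendAt k (D f)) w (update x k a) :
        EuclideanSpace ℂ (d k)) =
      Matrix.toEuclideanCLM (𝕜 := ℂ) (D f) (toLp 2 fun a => w (update x k a)) := fun f x => by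
    ext a
    simp only [Matrix.ofLp_toEuclideanCLM, extendAt_mulVec, update_self, update_idem]
    rfl
  refine le_of_mul_le_mul_left ?_ hcard
  rw [Finset.mul_sum]
  simp only [hslice, hact]
  rw [mul_left_comm, hslice, Finset.sum_comm, Finset.mul_sum]
  exact Finset.sum_le_sum fun x _ => hD _

end Extension

section Covariance

open WithLp

variable {n : Type*} [Fintype n] [DecidableEq n]

theorem IsDensityMatrix.sum_eigenvalues {ρ : Matrix n n ℂ} (hρ : IsDensityMatrix ρ)
    (hh : ρ.IsHermitian) : ∑ i, hh.eigenvalues i = 1 := by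
  have h : ((∑ i, hh.eigenvalues i : ℝ) : ℂ) = 1 := by
    rw [← hρ.2, hh.trace_eq_sum_eigenvalues]
    simp
  exact_mod_cast h

theorem entropy_nonneg {ρ : Matrix n n ℂ} (hρ : IsDensityMatrix ρ) : 0 ≤ entropy ρ := by
  have hh := hρ.1.isHermitian
  have hsum := hρ.sum_eigenvalues hh
  rw [entropy, dif_pos hh, neg_nonneg]
  refine Finset.sum_nonpos fun i _ => ?_
  refine mul_nonpos_of_nonneg_of_nonpos (hρ.1.eigenvalues_nonneg i)
    (Real.log_nonpos (hρ.1.eigenvalues_nonneg i) ?_)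
  rw [← hsum]
  exact Finset.single_le_sum (fun i _ => hρ.1.eigenvalues_nonneg i) (Finset.mem_univ i)

/-- The defect from one of the largest eigenvalue is controlled by the entropy. -/
theorem exists_unit_vector_entropy_ge [Nonempty n] {ρ : Matrix n n ℂ} (hρ : IsDensityMatrix ρ) :
    ∃ (φ : n → ℂ) (e : ℝ), ‖toLp 2 φ‖ = 1 ∧ (ρ * pureState φ).trace = ((1 - e : ℝ) : ℂ) ∧
      e ≤ entropy ρ ∧ 4 * e - 9 * e ^ 2 ≤ entropy ρ := by
  have hh := hρ.1.isHermitian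
  have hsum := hρ.sum_eigenvalues hh
  obtain ⟨j, hj⟩ := Finite.exists_max hh.eigenvalues
  refine ⟨ofLp (hh.eigenvectorBasis j), 1 - hh.eigenvalues j,
    hh.eigenvectorBasis.norm_eq_one j, ?_, ?_, ?_⟩
  · have h1 : Matrix.toEuclideanCLM (𝕜 := ℂ) ρ (hh.eigenvectorBasis j) =
        hh.eigenvalues j • hh.eigenvectorBasis j := by
      have := hh.mulVec_eigenvectorBasis j
      ext i
      rw [Matrix.ofLp_toEuclideanCLM, this]
      rfl
    rw [Matrix.trace_mul_comm, trace_pureState_mul]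
    change inner ℂ (hh.eigenvectorBasis j)
      (Matrix.toEuclideanCLM (𝕜 := ℂ) ρ (hh.eigenvectorBasis j)) = _
    rw [h1, ← Complex.coe_smul, inner_smul_right, inner_self_eq_norm_sq_to_K,
      hh.eigenvectorBasis.norm_eq_one j]
    simp
  · rw [entropy, dif_pos hh]
    exact entropy_sum_ge_one_sub hρ.1.eigenvalues_nonneg hsum hj
  · rw [entropy, dif_pos hh]
    exact entropy_sum_ge_quadratic hρ.1.eigenvalues_nonneg hsum j

variable {F : Type*} [Fintype F]

/-- The covariance of operators on distinct sites is controlled by the entropy of one site. -/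
theorem re_sum_inner_deviation_extendAt_le [∀ k, Nonempty (d k)] {k l : Fin N} (hkl : k ≠ l)
    {t : (∀ j, d j) → ℂ} (ht : ‖toLp 2 t‖ = 1)
    {X : F → Matrix (d k) (d k) ℂ} {D : F → Matrix (d l) (d l) ℂ} {P R : ℝ}
    (hX : ∀ w, ∑ f, ‖Matrix.toEuclideanCLM (𝕜 := ℂ) (extendAt k (X f)) w‖ ^ 2 ≤ P * ‖w‖ ^ 2)
    (hD : ∀ w, ∑ f, ‖Matrix.toEuclideanCLM (𝕜 := ℂ) (extendAt l (D f)) w‖ ^ 2 ≤ R * ‖w‖ ^ 2) :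
    (∑ f, inner ℂ (deviation (Matrix.toEuclideanCLM (𝕜 := ℂ) (extendAt k (X f))) (toLp 2 t))
      (deviation (Matrix.toEuclideanCLM (𝕜 := ℂ) (extendAt l (D f))) (toLp 2 t))).re ≤
      (P + R) * √(entropy (reduce l (pureState t))) := by
  have hdX := sum_norm_deviation_sq_le ht hX
  have hdD := sum_norm_deviation_sq_le ht hD
  have hP : 0 ≤ P := (Finset.sum_nonneg fun f _ => sq_nonneg _).trans hdX
  have hR : 0 ≤ R := (Finset.sum_nonneg fun f _ => sq_nonneg _).trans hdD
  have hρ := isDensityMatrix_reduce_pureState l ht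
  set s := entropy (reduce l (pureState t)) with hs
  have hamgm : √P * √R * (2 * √s) ≤ (P + R) * √s := by
    have h1 := Real.sq_sqrt hP
    have h2 := Real.sq_sqrt hR
    have h3 : √P * √R * 2 ≤ P + R := by nlinarith [sq_nonneg (√P - √R)]
    rw [← mul_assoc]
    gcongr
  refine (Complex.re_le_norm _).trans (le_trans ?_ hamgm)
  rcases le_or_gt (1 / 4) s with h4 | h4
  · refine (norm_sum_inner_le hdX hdD).trans (le_mul_of_one_le_right (by positivity) ?_)
    have : (1 / 2 : ℝ) ≤ √s := Real.le_sqrt_of_sq_le (by linarith)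
    linarith
  · obtain ⟨φ, e, hφ, htr, he1, he2⟩ := exists_unit_vector_entropy_ge hρ
    rw [← hs] at he1 he2
    set Q := Matrix.toEuclideanCLM (𝕜 := ℂ) (extendAt l (pureState φ)) with hQdef
    have hQ : IsStarProjection Q := by
      constructor
      · rw [IsIdempotentElem, hQdef, ← map_mul, ← extendAt_mul, pureState_mul_self hφ]
      · rw [IsSelfAdjoint, hQdef, ← map_star, Matrix.star_eq_conjTranspose,
          conjTranspose_extendAt, conjTranspose_pureState]
    have hdist : ‖toLp 2 t - Q (toLp 2 t)‖ ^ 2 = e := by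
      have h1 : inner ℂ (toLp 2 t) (Q (toLp 2 t)) = ((1 - e : ℝ) : ℂ) := by
        rw [← htr, ← trace_mul_extendAt, trace_pureState_mul]
      have h2 : ‖Q (toLp 2 t)‖ ^ 2 = 1 - e := by
        have h3 : inner ℂ (Q (toLp 2 t)) (Q (toLp 2 t)) = inner ℂ (toLp 2 t) (Q (toLp 2 t)) := by
          rw [← ContinuousLinearMap.adjoint_inner_right, ← ContinuousLinearMap.star_eq_adjoint,
            hQ.isSelfAdjoint.star_eq]
          exact congrArg _ (DFunLike.congr_fun hQ.isIdempotentElem.eq _)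
        rw [h1, inner_self_eq_norm_sq_to_K] at h3
        exact Complex.ofReal_injective (by simpa using h3)
      rw [@norm_sub_sq ℂ, ht, h1, h2]
      simp
      ring
    have he0 : 0 ≤ e := hdist ▸ sq_nonneg _
    refine (norm_sum_inner_deviation_le ht hX hD hQ (fun f => ?_)
      (a := fun f => (pureState φ * D f).trace) (fun f => ?_) hdist (by linarith)).trans ?_
    · exact (extendAt_commute hkl.symm _ _).map (Matrix.toEuclideanCLM (𝕜 := ℂ))
    · rw [hQdef, ← map_mul, ← map_mul, ← extendAt_mul, ← extendAt_mul,
        pureState_mul_mul_pureState, extendAt_smul, map_smul]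
    · exact mul_le_mul_of_nonneg_left (three_sqrt_add_le_two_sqrt he0 he1 he2 h4) (by positivity)

end Covariance

/-- Lemma 4a of the paper. For a finite index set `F` of outgoing states
and operators `T_k^{i→f}` on `H_k` with `T^{i→f} = Σ_k (extension of T_k^{i→f} to H)`,
a unit vector `|t⟩` in `H`, and `P_k` the maximum over density matrices `σ` on `H_k` of
`Σ_f Var_σ(T_k^{i→f})`, one has
`Σ_f Var_{|t⟩}(T^{i→f}) ≤ ((1/N)·Σ_k P_k) · (N + 2N²·√((1/N)·Σ_k s_k))`. -/
theorem orthogonal_scattering_prob_bound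
    [∀ k, Nonempty (d k)] (hN : 1 ≤ N)
    {F : Type*} [Fintype F] (T : F → ∀ k, Matrix (d k) (d k) ℂ)
    (t : (∀ j, d j) → ℂ) (ht : ∑ x, Complex.normSq (t x) = 1)
    (P : Fin N → ℝ)
    (hP : ∀ k, IsGreatest
      {x : ℝ | ∃ σ : Matrix (d k) (d k) ℂ, IsDensityMatrix σ ∧ x = ∑ f, variance σ (T f k)}
      (P k)) :
    ∑ f, variance (pureState t) (∑ k, extendAt k (T f k)) ≤
      ((1 / (N : ℝ)) * ∑ k, P k) *
        ((N : ℝ) + 2 * (N : ℝ) ^ 2 *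
          Real.sqrt ((1 / (N : ℝ)) * ∑ k, entropy (reduce k (pureState t)))) := by
  have ht1 : ‖WithLp.toLp 2 t‖ = 1 := by
    rw [← sq_eq_sq₀ (norm_nonneg _) zero_le_one, EuclideanSpace.norm_sq_eq, one_pow, ← ht]
    simp only [Complex.normSq_eq_norm_sq]
  choose c hc using fun k => exists_center (hP k)
  have hD := fun k => sum_norm_extendAt_sq_le k (hc k)
  set s : Fin N → ℝ := fun k => entropy (reduce k (pureState t)) with hs
  have hs0 : ∀ k, 0 ≤ s k := fun k => entropy_nonneg (isDensityMatrix_reduce_pureState k ht1)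
  set y : F → Fin N → EuclideanSpace ℂ (∀ j, d j) := fun f k =>
    deviation (Matrix.toEuclideanCLM (𝕜 := ℂ) (extendAt k (T f k - c k f • 1)))
      (WithLp.toLp 2 t) with hy
  have hdev : ∀ f k, y f k =
      deviation (Matrix.toEuclideanCLM (𝕜 := ℂ) (extendAt k (T f k))) (WithLp.toLp 2 t) := by
    intro f k
    simp only [hy]
    rw [extendAt_sub, extendAt_smul, extendAt_one, map_sub, map_smul, map_one,
      deviation_sub_smul_one ht1]
  have hdiag : ∀ k, ∑ f, ‖y f k‖ ^ 2 ≤ P k := fun k => sum_norm_deviation_sq_le ht1 (hD k)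
  have hP0 : ∀ k, 0 ≤ P k := fun k => (Finset.sum_nonneg fun f _ => sq_nonneg _).trans (hdiag k)
  set C : Fin N → Fin N → ℝ := fun k l => (∑ f, inner ℂ (y f k) (y f l)).re with hC
  have hCsymm : ∀ k l, C k l = C l k := fun k l => by
    simp only [hC, Complex.re_sum]
    exact Finset.sum_congr rfl fun f _ => inner_re_symm (𝕜 := ℂ) _ _
  have hcov : ∀ k l, k ≠ l → C k l ≤ (P k + P l) * √(s l) := fun k l hkl =>
    re_sum_inner_deviation_extendAt_le hkl ht1 (hD k) (hD l)
  have hoff : ∀ k l, k ≠ l → C k l ≤ P k * √(s l) + P l * √(s k) := by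
    intro k l hkl
    rcases le_total (√(s k)) (√(s l)) with h | h
    · have h1 := hcov l k hkl.symm
      rw [hCsymm l k] at h1
      nlinarith [mul_le_mul_of_nonneg_left h (hP0 k)]
    · nlinarith [mul_le_mul_of_nonneg_left h (hP0 l), hcov k l hkl]
  have hCkl : ∀ k l, C k l ≤ (if k = l then P k else 0) + (P k * √(s l) + P l * √(s k)) := by
    intro k l
    rcases eq_or_ne k l with rfl | hkl
    · rw [if_pos rfl]
      have h1 : C k k ≤ P k := by
        refine le_trans (le_of_eq ?_) (hdiag k)
        simp only [hC, Complex.re_sum]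
        exact Finset.sum_congr rfl fun f _ => inner_self_eq_norm_sq (𝕜 := ℂ) _
      have := mul_nonneg (hP0 k) (Real.sqrt_nonneg (s k))
      linarith
    · rw [if_neg hkl, zero_add]
      exact hoff k l hkl
  have hvar : ∑ f, variance (pureState t) (∑ k, extendAt k (T f k)) = ∑ k, ∑ l, C k l := by
    have h : ∀ f, variance (pureState t) (∑ k, extendAt k (T f k)) =
        ∑ k, ∑ l, (inner ℂ (y f k) (y f l)).re := fun f => by
      rw [variance_pureState ht1, map_sum, deviation_sum]
      simp only [← hdev]
      rw [← inner_self_eq_norm_sq (𝕜 := ℂ), sum_inner]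
      simp only [inner_sum]
      simp
    simp only [h, hC, Complex.re_sum]
    rw [Finset.sum_comm]
    exact Finset.sum_congr rfl fun k _ => Finset.sum_comm
  have hNpos : (0 : ℝ) < N := by exact_mod_cast hN
  have hsqrt : ∑ k, √(s k) ≤ N * √((1 / (N : ℝ)) * ∑ k, s k) := by
    have h := Real.sum_sqrt_mul_sqrt_le (Finset.univ : Finset (Fin N)) (f := s) (g := fun _ => 1)
      hs0 (fun _ => zero_le_one)
    simp only [Real.sqrt_one, mul_one, Finset.sum_const, Finset.card_univ, Fintype.card_fin,
      nsmul_eq_mul] at h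
    refine h.trans_eq ?_
    rw [Real.sqrt_mul (by positivity), Real.sqrt_div zero_le_one, Real.sqrt_one]
    have h2 : √(N : ℝ) * √(N : ℝ) = N := Real.mul_self_sqrt hNpos.le
    have h3 : √(N : ℝ) ≠ 0 := (Real.sqrt_pos.2 hNpos).ne'
    nth_rw 2 [← h2]
    field_simp
  calc ∑ f, variance (pureState t) (∑ k, extendAt k (T f k)) = ∑ k, ∑ l, C k l := hvar
    _ ≤ ∑ k, ∑ l, ((if k = l then P k else 0) + (P k * √(s l) + P l * √(s k))) :=
        Finset.sum_le_sum fun k _ => Finset.sum_le_sum fun l _ => hCkl k l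
    _ = (∑ k, P k) * (1 + 2 * ∑ k, √(s k)) := by
        simp only [Finset.sum_add_distrib, Finset.sum_ite_eq, Finset.mem_univ, if_true,
          ← Finset.mul_sum, ← Finset.sum_mul]
        ring
    _ ≤ (∑ k, P k) * (1 + 2 * (N * √((1 / (N : ℝ)) * ∑ k, s k))) := by
        have := Finset.sum_nonneg fun k (_ : k ∈ Finset.univ) => hP0 k
        gcongr
    _ = _ := by
        field_simp

end Paper
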